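/- KL divergence of the tilted distribution is nonincreasing in α: writing q^{α}_j ∝ p_j·exp(f_j/α), the map α ↦ KL(q^{α}‖p) is monotonically nonincreasing on (0, ∞). -/

import Mathlib

/-!
With `t = 1 / α`, `L t = log ∑ p_j exp (t f_j)` and `m t` the mean of `f` under the tilted law `q^t`,
one has `KL(q^t ‖ p) = t * m t - L t`. Convexity of `L`, in the form of its tangent-line inequality
`L t + (s - t) * m t ≤ L s` (that is, `KL(q^t ‖ q^s) ≥ 0`), used in both directions shows that `m` is
monotone, and for `0 ≤ s ≤ t`
`KL(q^t ‖ p) - KL(q^s ‖ p) = KL(q^t ‖ q^s) + s * (m t - m s) ≥ 0`.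
-/

open Finset

/-- The exponential tilt of `p` along `f` with inverse temperature `t`. -/
noncomputable def tilt {ι : Type*} [Fintype ι] (p f : ι → ℝ) (t : ℝ) (j : ι) : ℝ :=
  p j * Real.exp (t * f j) / ∑ k, p k * Real.exp (t * f k)

/-- The log-partition function of the tilted family. -/
noncomputable def logZ {ι : Type*} [Fintype ι] (p f : ι → ℝ) (t : ℝ) : ℝ :=
  Real.log (∑ k, p k * Real.exp (t * f k))

section
variable {ι : Type*} [Fintype ι] [Nonempty ι] {p : ι → ℝ}

theorem partition_pos (hp0 : ∀ j, 0 < p j) (f : ι → ℝ)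
    (t : ℝ) : 0 < ∑ k, p k * Real.exp (t * f k) :=
  Finset.sum_pos (fun k _ => mul_pos (hp0 k) (Real.exp_pos _)) Finset.univ_nonempty

theorem tilt_eq (hp0 : ∀ j, 0 < p j) (f : ι → ℝ)
    (t : ℝ) (j : ι) : tilt p f t j = p j * Real.exp (t * f j - logZ p f t) := by
  rw [tilt, logZ, Real.exp_sub, Real.exp_log (partition_pos hp0 f t), mul_div_assoc]

theorem tilt_sum (hp0 : ∀ j, 0 < p j) (f : ι → ℝ)
    (t : ℝ) : ∑ j, tilt p f t j = 1 := by
  simp only [tilt]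
  rw [← Finset.sum_div, div_self (partition_pos hp0 f t).ne']

/-- The tangent-line inequality for `logZ`, equivalent to nonnegativity of the divergence between
two tilts. -/
theorem logZ_tangent (hp0 : ∀ j, 0 < p j) (f : ι → ℝ)
    (s t : ℝ) :
    logZ p f t + (s - t) * ∑ j, tilt p f t j * f j ≤ logZ p f s := by
  have h : ∑ j, tilt p f t j * ((s - t) * f j - logZ p f s + logZ p f t + 1)
      ≤ ∑ j, tilt p f s j := by
    refine Finset.sum_le_sum fun j _ => ?_
    -- The two tilts differ by an exponential factor, bounded below by `x + 1 ≤ exp x`.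
    have e : tilt p f s j
        = tilt p f t j * Real.exp ((s - t) * f j - logZ p f s + logZ p f t) := by
      rw [tilt_eq hp0, tilt_eq hp0, mul_assoc, ← Real.exp_add]
      ring_nf
    have hq : 0 ≤ tilt p f t j := by
      rw [tilt_eq hp0]
      exact (mul_pos (hp0 j) (Real.exp_pos _)).le
    rw [e]
    exact mul_le_mul_of_nonneg_left (Real.add_one_le_exp _) hq
  have e : ∑ j, tilt p f t j * ((s - t) * f j - logZ p f s + logZ p f t + 1)
      = (s - t) * ∑ j, tilt p f t j * f j
        + (∑ j, tilt p f t j) * (-logZ p f s + logZ p f t + 1) := by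
    rw [Finset.mul_sum, Finset.sum_mul, ← Finset.sum_add_distrib]
    exact Finset.sum_congr rfl fun j _ => by ring
  rw [e, tilt_sum hp0, tilt_sum hp0] at h
  linarith

theorem kl_tilt (hp0 : ∀ j, 0 < p j) (f : ι → ℝ)
    (t : ℝ) :
    ∑ j, tilt p f t j * Real.log (tilt p f t j / p j)
      = t * ∑ j, tilt p f t j * f j - logZ p f t := by
  have e : ∀ j, Real.log (tilt p f t j / p j) = t * f j - logZ p f t := fun j => by
    rw [tilt_eq hp0, mul_div_cancel_left₀ _ (hp0 j).ne', Real.log_exp]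
  simp only [e, mul_sub, Finset.sum_sub_distrib]
  rw [← Finset.sum_mul, tilt_sum hp0, one_mul, Finset.mul_sum]
  congr 1
  exact Finset.sum_congr rfl fun j _ => by ring

theorem kl_tilt_mono (hp0 : ∀ j, 0 < p j) (f : ι → ℝ)
    {s t : ℝ} (hs : 0 ≤ s) (hst : s ≤ t) :
    ∑ j, tilt p f s j * Real.log (tilt p f s j / p j)
      ≤ ∑ j, tilt p f t j * Real.log (tilt p f t j / p j) := by
  rw [kl_tilt hp0, kl_tilt hp0]
  rcases hst.eq_or_lt with rfl | hlt
  · exact le_rfl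
  have h1 := logZ_tangent hp0 f s t
  have h2 := logZ_tangent hp0 f t s
  have hm : ∑ j, tilt p f s j * f j ≤ ∑ j, tilt p f t j * f j := by
    refine le_of_mul_le_mul_left ?_ (sub_pos.2 hlt)
    linarith
  have := mul_le_mul_of_nonneg_left hm hs
  linarith

end

theorem tilted_kl_antitone {ι : Type*} [Fintype ι] [Nonempty ι]
    (p : ι → ℝ) (hp0 : ∀ j, 0 < p j) (hp1 : ∑ j, p j = 1) (f : ι → ℝ) :
    AntitoneOn (fun α : ℝ =>
      let q : ι → ℝ := fun j => p j * Real.exp (f j / α) / ∑ k, p k * Real.exp (f k / α)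
      ∑ j, q j * Real.log (q j / p j)) (Set.Ioi 0) := by
  intro a ha b hb hab
  have h := kl_tilt_mono hp0 f (inv_nonneg.2 (le_of_lt hb)) (inv_anti₀ ha hab)
  simpa only [tilt, inv_mul_eq_div] using h
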